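/- There is an absolute constant C such that for all reals X, P, Q with 3 ≤ P ≤ Q ≤ X and every integer h with 1 ≤ h ≤ X, one has ∑_{l=1}^{h} #{ n ∈ ℤ : X ≤ n ≤ 2X, neither n nor n+l has a prime factor in [P,Q] } ≤ C · h · X · ((log P)/(log Q))². -/

import Mathlib

open Finset
open scoped Classical

lemma aux_mertens (n : ℕ) (hn : 1 ≤ n) :
    ∑ p ∈ (Finset.Icc 1 n).filter Nat.Prime, Real.log p / p ≤ Real.log n + Real.log 4 := by
  have hn0 : (0:ℝ) < n := by exact_mod_cast hn
  have h1 : ∀ m ∈ Finset.Icc 1 n,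
      ∑ p ∈ (Finset.Icc 1 n).filter Nat.Prime, (if p ∣ m then Real.log p else 0) ≤ Real.log n := by
    intro m hm
    rw [Finset.mem_Icc] at hm
    have hm0 : m ≠ 0 := by omega
    rw [← Finset.sum_filter]
    have : ((Finset.Icc 1 n).filter Nat.Prime).filter (fun p => p ∣ m) = m.primeFactors := by
      ext p
      simp only [Finset.mem_filter, Finset.mem_Icc, Nat.mem_primeFactors]
      constructor
      · rintro ⟨⟨_, hp⟩, hd⟩; exact ⟨hp, hd, hm0⟩
      · rintro ⟨hp, hd, _⟩
        exact ⟨⟨⟨hp.one_le, (Nat.le_of_dvd (by omega) hd).trans hm.2⟩, hp⟩, hd⟩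
    rw [this, ← Real.log_prod]
    · apply Real.log_le_log
      · apply Finset.prod_pos
        intro p hp
        exact_mod_cast (Nat.prime_of_mem_primeFactors hp).pos
      · have := Nat.le_of_dvd (by omega) (Nat.prod_primeFactors_dvd m)
        calc (∏ p ∈ m.primeFactors, (p:ℝ)) = ((∏ p ∈ m.primeFactors, p : ℕ) : ℝ) := by push_cast; rfl
          _ ≤ n := by exact_mod_cast this.trans hm.2
    · intro p hp
      have := (Nat.prime_of_mem_primeFactors hp).pos
      positivity
  have h2 := Finset.sum_le_sum h1
  rw [Finset.sum_comm] at h2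
  simp only [Finset.sum_const, Nat.card_Icc, nsmul_eq_mul] at h2
  have h3 : ∀ p ∈ (Finset.Icc 1 n).filter Nat.Prime,
      (n:ℝ) * (Real.log p / p) - Real.log p ≤ ∑ m ∈ Finset.Icc 1 n, (if p ∣ m then Real.log p else 0) := by
    intro p hp
    rw [Finset.mem_filter] at hp
    have hpp := hp.2.pos
    rw [← Finset.sum_filter, Finset.sum_const, nsmul_eq_mul]
    have : ((Finset.Icc 1 n).filter (fun m => p ∣ m)).card = n / p := by
      have := Nat.Ioc_filter_dvd_card_eq_div n p
      rwa [show Finset.Ioc 0 n = Finset.Icc 1 n from by ext; simp [Nat.succ_le_iff]] at this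
    rw [this]
    have h4 : (n:ℝ)/p - 1 ≤ ((n/p : ℕ):ℝ) := by
      have := Nat.lt_floor_add_one ((n:ℝ)/p)
      rw [Nat.floor_div_eq_div] at this
      linarith
    have h5 : 0 ≤ Real.log p := Real.log_natCast_nonneg p
    calc _ = ((n:ℝ)/p - 1) * Real.log p := by ring
      _ ≤ _ := by gcongr
  have h4 := (Finset.sum_le_sum h3).trans h2
  rw [Finset.sum_sub_distrib, ← Finset.mul_sum] at h4
  have h5 : ∑ p ∈ (Finset.Icc 1 n).filter Nat.Prime, Real.log p ≤ Real.log 4 * n := by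
    have := Chebyshev.theta_le_log4_mul_x (x := n) (by positivity)
    rw [Chebyshev.theta] at this
    rwa [Nat.floor_natCast, show Finset.Ioc 0 n = Finset.Icc 1 n from by ext; simp [Nat.succ_le_iff]] at this
  have h6 : (n:ℝ) * ∑ p ∈ (Finset.Icc 1 n).filter Nat.Prime, Real.log p / p ≤ n * (Real.log n + Real.log 4) := by
    simp only [Nat.add_sub_cancel] at h4
    linarith
  exact le_of_mul_le_mul_left h6 hn0

lemma aux_rankin (z : ℝ) (hz : 2 ≤ z) (S : Finset ℕ) (hS : ∀ p ∈ S, p.Prime ∧ (p:ℝ) ≤ z)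
    (g : ℕ → ℝ) (hg : ∀ p ∈ S, 0 ≤ g p ∧ g p ≤ 6 / p) :
    (1/2) * ∏ p ∈ S, (1 + g p) ≤
      ∑ F ∈ S.powerset.filter (fun F => ((∏ p ∈ F, p : ℕ) : ℝ) ≤ z ^ 37), ∏ p ∈ F, g p := by
  have hz0 : 0 < z := by linarith
  have hL : 0 < Real.log z := Real.log_pos (by linarith)
  have hL2 : Real.log 2 ≤ Real.log z := Real.log_le_log (by norm_num) hz
  set ε := 1 / Real.log z with hε
  have hε0 : 0 < ε := by positivity
  have hsplit := Finset.sum_filter_add_sum_filter_not S.powerset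
    (fun F => ((∏ p ∈ F, p : ℕ) : ℝ) ≤ z ^ 37) (fun F => ∏ p ∈ F, g p)
  rw [← Finset.prod_one_add] at hsplit
  set T := ∏ p ∈ S, (1 + g p) with hT
  have hT0 : 0 ≤ T := Finset.prod_nonneg fun p hp => by linarith [(hg p hp).1]
  have hzε : (z ^ 37) ^ ε = Real.exp 37 := by
    rw [Real.rpow_def_of_pos (by positivity), Real.log_pow, hε]
    congr 1
    field_simp
    norm_num
  have hbad : ∑ F ∈ S.powerset.filter (fun F => ¬ ((∏ p ∈ F, p : ℕ) : ℝ) ≤ z ^ 37), ∏ p ∈ F, g p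
      ≤ (1/2) * T := by
    calc _ ≤ ∑ F ∈ S.powerset.filter (fun F => ¬ ((∏ p ∈ F, p : ℕ) : ℝ) ≤ z ^ 37),
          Real.exp (-37) * ∏ p ∈ F, (g p * (p:ℝ)^ε) := by
          apply Finset.sum_le_sum
          intro F hF
          simp only [Finset.mem_filter, Finset.mem_powerset, not_le] at hF
          have hgF : 0 ≤ ∏ p ∈ F, g p := Finset.prod_nonneg fun p hp => (hg p (hF.1 hp)).1
          rw [Finset.prod_mul_distrib, Real.finsetProd_rpow _ _ (fun _ _ => by positivity)]
          have h1 : Real.exp 37 ≤ (∏ p ∈ F, (p:ℝ)) ^ ε := by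
            rw [← hzε]
            apply Real.rpow_le_rpow (by positivity) _ hε0.le
            have := hF.2.le
            push_cast at this
            exact this
          calc ∏ p ∈ F, g p = Real.exp (-37) * ((∏ p ∈ F, g p) * Real.exp 37) := by
                rw [mul_left_comm, ← Real.exp_add]; simp
            _ ≤ _ := by gcongr
      _ ≤ ∑ F ∈ S.powerset, Real.exp (-37) * ∏ p ∈ F, (g p * (p:ℝ)^ε) := by
          apply Finset.sum_le_sum_of_subset_of_nonneg (Finset.filter_subset _ _)
          intro F hF _
          rw [Finset.mem_powerset] at hF
          apply mul_nonneg (Real.exp_pos _).le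
          exact Finset.prod_nonneg fun p hp => mul_nonneg (hg p (hF hp)).1 (by positivity)
      _ = Real.exp (-37) * ∏ p ∈ S, (1 + g p * (p:ℝ)^ε) := by
          rw [← Finset.mul_sum, ← Finset.prod_one_add]
      _ ≤ Real.exp (-37) * ∏ p ∈ S, ((1 + g p) * Real.exp (12 / Real.log z * (Real.log p / p))) := by
          gcongr with p hp
          · intro p hp; have := mul_nonneg (hg p hp).1 (show 0 ≤ (p:ℝ)^ε by positivity); linarith
          · obtain ⟨hpp, hpz⟩ := hS p hp
            obtain ⟨hg0, hg1⟩ := hg p hp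
            have hp0 : (0:ℝ) < p := by exact_mod_cast hpp.pos
            have hlp : 0 ≤ Real.log p := Real.log_natCast_nonneg p
            have ht1 : Real.log p * ε ≤ 1 := by
              rw [hε, mul_one_div, div_le_one hL]
              exact Real.log_le_log hp0 hpz
            have ht0 : 0 ≤ Real.log p * ε := by positivity
            have h1 : (p:ℝ)^ε ≤ 1 + 2 * (Real.log p * ε) := by
              rw [Real.rpow_def_of_pos hp0]
              have := Real.abs_exp_sub_one_le (x := Real.log p * ε) (by rw [abs_of_nonneg ht0]; exact ht1)
              rw [abs_of_nonneg ht0] at this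
              linarith [(abs_le.mp this).2]
            have h2 : 1 ≤ (p:ℝ)^ε := Real.one_le_rpow (by exact_mod_cast hpp.one_le) hε0.le
            calc 1 + g p * (p:ℝ)^ε ≤ (1 + g p) * (1 + g p * ((p:ℝ)^ε - 1)) := by
                  nlinarith [mul_nonneg hg0 (mul_nonneg hg0 (sub_nonneg.2 h2))]
              _ ≤ (1 + g p) * (1 + 12 / Real.log z * (Real.log p / p)) := by
                  gcongr (1 + g p) * (1 + ?_)
                  calc g p * ((p:ℝ)^ε - 1) ≤ 6 / p * (2 * (Real.log p * ε)) := by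
                        apply mul_le_mul hg1 (by linarith) (by linarith) (by positivity)
                    _ = _ := by rw [hε]; ring
              _ ≤ _ := by
                  gcongr
                  rw [add_comm]; exact Real.add_one_le_exp _
      _ = Real.exp (-37) * (T * Real.exp (12 / Real.log z * ∑ p ∈ S, (Real.log p / p))) := by
          rw [Finset.prod_mul_distrib, ← Real.exp_sum, ← Finset.mul_sum]
      _ ≤ Real.exp (-37) * (T * Real.exp 36) := by
          gcongr
          have h1 : ∑ p ∈ S, (Real.log p / p) ≤ Real.log z + Real.log 4 := by
            calc _ ≤ ∑ p ∈ (Finset.Icc 1 ⌊z⌋₊).filter Nat.Prime, Real.log p / p := by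
                  apply Finset.sum_le_sum_of_subset_of_nonneg
                  · intro p hp
                    simp only [Finset.mem_filter, Finset.mem_Icc]
                    exact ⟨⟨(hS p hp).1.one_le, Nat.le_floor (hS p hp).2⟩, (hS p hp).1⟩
                  · intro p _ _
                    exact div_nonneg (Real.log_natCast_nonneg p) (by positivity)
              _ ≤ _ := aux_mertens _ (Nat.le_floor (by norm_num; linarith))
              _ ≤ _ := by
                  gcongr
                  · have : 1 ≤ ⌊z⌋₊ := Nat.le_floor (by norm_num; linarith)
                    exact_mod_cast this
                  · exact Nat.floor_le hz0.le
          have h4 : Real.log 4 = 2 * Real.log 2 := by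
            rw [show (4:ℝ) = 2^2 by norm_num, Real.log_pow]; norm_num
          rw [div_mul_eq_mul_div, div_le_iff₀ hL]
          linarith
      _ = T * Real.exp (-1) := by rw [mul_left_comm, ← Real.exp_add]; norm_num
      _ ≤ _ := by
          rw [mul_comm]
          gcongr
          rw [Real.exp_neg, one_div]
          gcongr
          linarith [Real.add_one_le_exp (1:ℝ)]
  linarith

lemma aux_inj {F G : Finset ℕ} (hF : ∀ p ∈ F, p.Prime) (hG : ∀ p ∈ G, p.Prime)
    (h : ∏ p ∈ F, p = ∏ p ∈ G, p) : F = G := by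
  rw [← Nat.primeFactors_prod hF, ← Nat.primeFactors_prod hG, h]

lemma aux_sum_le (S : Finset ℕ) (hS : ∀ p ∈ S, p.Prime) (T : Finset (Finset ℕ)) (hT : ∀ F ∈ T, F ⊆ S)
    (D : Finset ℕ) (hD : ∀ F ∈ T, ∏ p ∈ F, p ∈ D) :
    ∑ F ∈ T, ∏ p ∈ F, (1 / (p:ℝ)) ≤ ∑ d ∈ D, 1 / (d:ℝ) := by
  calc _ = ∑ d ∈ T.image (fun F => ∏ p ∈ F, p), 1 / (d:ℝ) := by
        rw [Finset.sum_image]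
        · apply Finset.sum_congr rfl
          intro F _
          push_cast
          simp
        · intro F hF G hG h
          exact aux_inj (fun p hp => hS p (hT F hF hp)) (fun p hp => hS p (hT G hG hp)) h
    _ ≤ _ := by
        apply Finset.sum_le_sum_of_subset_of_nonneg
        · intro d hd
          rw [Finset.mem_image] at hd
          obtain ⟨F, hF, rfl⟩ := hd
          exact hD F hF
        · intros; positivity

lemma aux_upper (n : ℕ) (hn : 2 ≤ n) :
    ∏ p ∈ (Finset.Icc 1 n).filter Nat.Prime, (1 + 1 / (p:ℝ)) ≤ 78 * Real.log n := by
  have h2 : (2:ℝ) ≤ n := by exact_mod_cast hn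
  have h := aux_rankin n h2 ((Finset.Icc 1 n).filter Nat.Prime)
    (by intro p hp; simp only [Finset.mem_filter, Finset.mem_Icc] at hp
        exact ⟨hp.2, by exact_mod_cast hp.1.2⟩) (fun p => 1 / (p:ℝ))
    (by intro p hp; exact ⟨by positivity, by gcongr; norm_num⟩)
  have h3 := aux_sum_le ((Finset.Icc 1 n).filter Nat.Prime) (fun p hp => (Finset.mem_filter.1 hp).2)
    (((Finset.Icc 1 n).filter Nat.Prime).powerset.filter (fun F => ((∏ p ∈ F, p : ℕ) : ℝ) ≤ (n:ℝ) ^ 37))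
    (fun F hF => Finset.mem_powerset.1 (Finset.mem_filter.1 hF).1) (Finset.Icc 1 (n^37)) (by
      intro F hF
      simp only [Finset.mem_filter, Finset.mem_powerset] at hF
      rw [Finset.mem_Icc]
      constructor
      · apply Nat.one_le_iff_ne_zero.2
        rw [Finset.prod_ne_zero_iff]
        intro p hp
        exact (Finset.mem_filter.1 (hF.1 hp)).2.ne_zero
      · exact_mod_cast hF.2)
  have h4 := harmonic_le_one_add_log (n^37)
  rw [harmonic_eq_sum_Icc] at h4
  push_cast at h4
  rw [Real.log_pow] at h4
  simp only [one_div] at *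
  have h5 : Real.log 2 ≤ Real.log n := Real.log_le_log (by norm_num) h2
  have := Real.log_two_gt_d9
  push_cast at *
  linarith

lemma aux_sq (n : ℕ) : ∑ b ∈ Finset.Icc 1 n, 1 / (b:ℝ)^2 ≤ 2 := by
  have key : ∀ n : ℕ, ∑ b ∈ Finset.Icc 1 (n+1), 1 / (b:ℝ)^2 ≤ 2 - 1 / ((n:ℝ)+1) := by
    intro n
    induction n with
    | zero => norm_num
    | succ k ih =>
      rw [Finset.sum_Icc_succ_top (by omega)]
      have : 1 / (((k + 1 + 1 : ℕ)):ℝ)^2 ≤ 1 / ((k:ℝ)+1) - 1 / ((k:ℝ)+1+1) := by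
        push_cast
        rw [div_sub_div _ _ (by positivity) (by positivity), div_le_div_iff₀ (by positivity) (by positivity)]
        nlinarith [(Nat.cast_nonneg k : (0:ℝ) ≤ k)]
      push_cast at *
      linarith
  cases n with
  | zero => norm_num
  | succ k => have := key k; have : 0 ≤ 1 / ((k:ℝ)+1) := by positivity
              linarith [key k]

lemma aux_lower (n : ℕ) :
    Real.log (n+1) ≤ 2 * ∏ p ∈ (Finset.Icc 1 n).filter Nat.Prime, (1 + 1 / (p:ℝ)) := by
  have h4 := log_add_one_le_harmonic n
  rw [harmonic_eq_sum_Icc] at h4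
  push_cast at h4
  set S := (Finset.Icc 1 n).filter Nat.Prime with hS
  have hch : ∀ m : ℕ, ∃ q : Finset ℕ × ℕ, m ∈ Finset.Icc 1 n →
      q ∈ S.powerset ×ˢ Finset.Icc 1 n ∧ m = q.2^2 * ∏ p ∈ q.1, p := by
    intro m
    by_cases hm : m ∈ Finset.Icc 1 n
    swap
    · exact ⟨(∅, 0), fun h => absurd h hm⟩
    obtain ⟨a, b, hab, hsq⟩ := Nat.sq_mul_squarefree m
    rw [Finset.mem_Icc] at hm
    have hb : b ≠ 0 := by rintro rfl; simp at hab; omega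
    have ha : a ≠ 0 := hsq.ne_zero
    refine ⟨(a.primeFactors, b), fun _ => ⟨?_, ?_⟩⟩
    · simp only [Finset.mem_product, Finset.mem_powerset, Finset.mem_Icc]
      refine ⟨?_, by omega, ?_⟩
      · intro p hp
        have hpm : p ∣ m := (Nat.dvd_of_mem_primeFactors hp).trans (hab ▸ Dvd.intro_left _ rfl)
        have hpp := Nat.prime_of_mem_primeFactors hp
        simp only [hS, Finset.mem_filter, Finset.mem_Icc]
        exact ⟨⟨hpp.one_le, (Nat.le_of_dvd (by omega) hpm).trans hm.2⟩, hpp⟩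
      · have : b ∣ m := hab ▸ Dvd.intro _ (by rw [pow_two, mul_assoc])
        exact (Nat.le_of_dvd (by omega) this).trans hm.2
    · simp only [Nat.prod_primeFactors_of_squarefree hsq, hab]
  choose f hf using hch
  calc Real.log (n+1) ≤ _ := h4
    _ = ∑ m ∈ Finset.Icc 1 n, (1 / ((f m).2:ℝ)^2 * ∏ p ∈ (f m).1, 1 / (p:ℝ)) := by
        apply Finset.sum_congr rfl
        intro m hm
        conv_lhs => rw [(hf m hm).2]
        push_cast
        simp [mul_comm]
    _ = ∑ q ∈ (Finset.Icc 1 n).image f, (1 / (q.2:ℝ)^2 * ∏ p ∈ q.1, 1 / (p:ℝ)) := by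
        rw [Finset.sum_image]
        intro a ha b hb hab
        rw [(hf a ha).2, (hf b hb).2, hab]
    _ ≤ ∑ q ∈ S.powerset ×ˢ Finset.Icc 1 n, (1 / (q.2:ℝ)^2 * ∏ p ∈ q.1, 1 / (p:ℝ)) := by
        apply Finset.sum_le_sum_of_subset_of_nonneg
        · intro q hq
          rw [Finset.mem_image] at hq
          obtain ⟨m, hm, rfl⟩ := hq
          exact (hf m hm).1
        · intros; positivity
    _ = (∑ b ∈ Finset.Icc 1 n, 1 / (b:ℝ)^2) * ∏ p ∈ S, (1 + 1 / (p:ℝ)) := by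
        rw [Finset.prod_one_add, Finset.sum_product, Finset.sum_mul_sum, Finset.sum_comm]
    _ ≤ _ := by
        gcongr
        exact aux_sq n

lemma aux_avg (S : Finset ℕ) (hS : ∀ p ∈ S, p.Prime) (h : ℕ) :
    ∑ l ∈ Finset.Icc 1 h, ∏ p ∈ S.filter (fun p => p ∣ l), (1 + 1 / (p:ℝ)) ≤ 2 * h := by
  calc _ ≤ ∑ l ∈ Finset.Icc 1 h, ∑ d ∈ (Finset.Icc 1 h).filter (fun d => d ∣ l), 1 / (d:ℝ) := by
        apply Finset.sum_le_sum
        intro l hl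
        rw [Finset.mem_Icc] at hl
        rw [Finset.prod_one_add]
        apply aux_sum_le S hS
        · intro F hF
          exact (Finset.mem_powerset.1 hF).trans (Finset.filter_subset _ _)
        · intro F hF
          rw [Finset.mem_powerset] at hF
          have hd : ∏ p ∈ F, p ∣ l := by
            apply Finset.prod_primes_dvd
            · intro p hp; exact (hS p (Finset.mem_filter.1 (hF hp)).1).prime
            · intro p hp; exact (Finset.mem_filter.1 (hF hp)).2
          rw [Finset.mem_filter, Finset.mem_Icc]
          exact ⟨⟨Nat.pos_of_dvd_of_pos hd (by omega), (Nat.le_of_dvd (by omega) hd).trans hl.2⟩, hd⟩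
    _ = ∑ d ∈ Finset.Icc 1 h, ∑ l ∈ (Finset.Icc 1 h).filter (fun l => d ∣ l), 1 / (d:ℝ) := by
        simp only [Finset.sum_filter]
        rw [Finset.sum_comm]
    _ ≤ ∑ d ∈ Finset.Icc 1 h, h * (1 / (d:ℝ)^2) := by
        apply Finset.sum_le_sum
        intro d hd
        rw [Finset.mem_Icc] at hd
        rw [Finset.sum_const, nsmul_eq_mul]
        have : ((Finset.Icc 1 h).filter (fun m => d ∣ m)).card = h / d := by
          have := Nat.Ioc_filter_dvd_card_eq_div h d
          rwa [show Finset.Ioc 0 h = Finset.Icc 1 h from by ext; simp [Nat.succ_le_iff]] at this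
        rw [this]
        have h1 : ((h/d : ℕ):ℝ) ≤ (h:ℝ)/d := Nat.cast_div_le
        calc _ ≤ (h:ℝ)/d * (1/d) := by gcongr
          _ = _ := by ring
    _ = h * ∑ d ∈ Finset.Icc 1 h, (1 / (d:ℝ)^2) := by rw [Finset.mul_sum]
    _ ≤ h * 2 := by gcongr; exact aux_sq h
    _ = _ := by ring

lemma aux_count1 (a b m r : ℕ) (hab : a ≤ b) (hm : 0 < m) :
    |(((Finset.Ioc a b).filter (fun n => n ≡ r [MOD m])).card : ℝ) - ((b:ℝ) - a) / m| ≤ 1 := by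
  have h := Nat.Ioc_filter_modEq_card a b hm r
  have hm' : (0:ℚ) < m := by exact_mod_cast hm
  have hle : ((a:ℚ) - r) / m ≤ ((b:ℚ) - r) / m := by
    have : (a:ℚ) ≤ b := by exact_mod_cast hab
    gcongr
  have hfl := Int.floor_le_floor hle
  rw [max_eq_left (by linarith)] at h
  have h1 : (((Finset.Ioc a b).filter (fun n => n ≡ r [MOD m])).card : ℚ) = 
    (⌊((b:ℚ) - r) / m⌋ : ℚ) - (⌊((a:ℚ) - r) / m⌋ : ℚ) := by exact_mod_cast h
  have h2 : |(((Finset.Ioc a b).filter (fun n => n ≡ r [MOD m])).card : ℚ) - ((b:ℚ) - a) / m| ≤ 1 := by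
    rw [h1]
    have e1 := Int.floor_le (((b:ℚ) - r) / m)
    have e2 := Int.lt_floor_add_one (((b:ℚ) - r) / m)
    have e3 := Int.floor_le (((a:ℚ) - r) / m)
    have e4 := Int.lt_floor_add_one (((a:ℚ) - r) / m)
    have e5 : ((b:ℚ) - a) / m = ((b:ℚ) - r) / m - ((a:ℚ) - r) / m := by ring
    rw [e5, abs_le]
    constructor <;> linarith
  have h3 := (Rat.cast_le (K := ℝ)).2 h2
  push_cast at h3
  exact h3

lemma aux_count (a b : ℕ) (hab : a ≤ b) (Ω : ℕ → Finset ℕ) (D : Finset ℕ) :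
    (∀ p ∈ D, p.Prime ∧ Ω p ⊆ Finset.range p) → ∀ m r : ℕ, 0 < m → (∀ p ∈ D, m.Coprime p) →
    |(((Finset.Ioc a b).filter (fun n => n ≡ r [MOD m] ∧ ∀ p ∈ D, n % p ∈ Ω p)).card : ℝ)
      - ((b:ℝ) - a) * (∏ p ∈ D, ((Ω p).card : ℝ) / p) / m| ≤ ∏ p ∈ D, ((Ω p).card : ℝ) := by
  induction D using Finset.induction_on with
  | empty =>
    intro _ m r hm _
    simpa using aux_count1 a b m r hab hm
  | insert q D hq ih =>
    intro hD m r hm hco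
    have hqp := (hD q (Finset.mem_insert_self q D)).1
    have hqΩ := (hD q (Finset.mem_insert_self q D)).2
    have hmq := hco q (Finset.mem_insert_self q D)
    have ih' := ih (fun p hp => hD p (Finset.mem_insert_of_mem hp))
    let R : ℕ → ℕ := fun c => (Nat.chineseRemainder hmq r c : ℕ)
    have hR : ∀ c n, (n ≡ R c [MOD m * q]) ↔ (n ≡ r [MOD m] ∧ n ≡ c [MOD q]) := by
      intro c n
      rw [← Nat.modEq_and_modEq_iff_modEq_mul hmq]
      have h1 := (Nat.chineseRemainder hmq r c).2.1
      have h2 := (Nat.chineseRemainder hmq r c).2.2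
      exact ⟨fun h => ⟨h.1.trans h1, h.2.trans h2⟩, fun h => ⟨h.1.trans h1.symm, h.2.trans h2.symm⟩⟩
    have hcard : ((Finset.Ioc a b).filter (fun n => n ≡ r [MOD m] ∧ ∀ p ∈ insert q D, n % p ∈ Ω p)).card
        = ∑ c ∈ Ω q, ((Finset.Ioc a b).filter (fun n => n ≡ R c [MOD m * q] ∧ ∀ p ∈ D, n % p ∈ Ω p)).card := by
      rw [Finset.card_eq_sum_card_fiberwise (f := fun n => n % q) (t := Ω q)]
      · apply Finset.sum_congr rfl
        intro c hc
        have hcq : c < q := Finset.mem_range.1 (hqΩ hc)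
        congr 1
        ext n
        simp only [Finset.mem_filter, Finset.mem_Ioc, Finset.forall_mem_insert, hR]
        have : n ≡ c [MOD q] ↔ n % q = c := by
          rw [Nat.ModEq, Nat.mod_eq_of_lt hcq]
        rw [this]
        constructor
        · rintro ⟨⟨h1, h2, h3, h4⟩, h5⟩; exact ⟨h1, ⟨h2, h5⟩, h4⟩
        · rintro ⟨h1, ⟨h2, h5⟩, h4⟩; exact ⟨⟨h1, h2, h5 ▸ hc, h4⟩, h5⟩
      · intro n hn
        simp only [Finset.coe_filter, Set.mem_ofPred_eq, Finset.forall_mem_insert] at hn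
        exact hn.2.2.1
    rw [hcard, Finset.prod_insert hq, Finset.prod_insert hq]
    have hq0 : (0:ℝ) < q := by exact_mod_cast hqp.pos
    have hm0 : (0:ℝ) < m := by exact_mod_cast hm
    push_cast
    have e : ((b:ℝ) - a) * (((Ω q).card : ℝ) / q * ∏ p ∈ D, ((Ω p).card : ℝ) / p) / m
      = ∑ c ∈ Ω q, ((b:ℝ) - a) * (∏ p ∈ D, ((Ω p).card : ℝ) / p) / ((m * q : ℕ) : ℝ) := by
      rw [Finset.sum_const, nsmul_eq_mul]
      generalize (∏ p ∈ D, ((Ω p).card : ℝ) / p) = K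
      generalize ((Ω q).card : ℝ) = W
      rw [Nat.cast_mul]
      field_simp
    rw [e, ← Finset.sum_sub_distrib]
    calc _ ≤ ∑ c ∈ Ω q, _ := Finset.abs_sum_le_sum_abs _ _
      _ ≤ ∑ c ∈ Ω q, ∏ p ∈ D, ((Ω p).card : ℝ) := by
        apply Finset.sum_le_sum
        intro c _
        apply ih' (m * q) (R c) (Nat.mul_pos hm hqp.pos)
        intro p hp
        apply Nat.Coprime.mul_left (hco p (Finset.mem_insert_of_mem hp))
        rw [Nat.coprime_primes hqp (hD p (Finset.mem_insert_of_mem hp)).1]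
        rintro rfl; exact hq hp
      _ = _ := by rw [Finset.sum_const, nsmul_eq_mul]

lemma aux_alt (F0 F : Finset ℕ) (h : F0 ⊆ F) :
    ∑ D ∈ Finset.Icc F0 F, (-1:ℝ)^D.card = if F0 = F then (-1:ℝ)^F0.card else 0 := by
  rw [Finset.Icc_eq_image_powerset h, Finset.sum_image]
  · have : ∀ E ∈ (F \ F0).powerset, (-1:ℝ)^(F0 ∪ E).card = (-1:ℝ)^F0.card * (-1:ℝ)^E.card := by
      intro E hE
      rw [Finset.mem_powerset] at hE
      rw [Finset.card_union_of_disjoint, pow_add]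
      exact Finset.disjoint_of_subset_right hE Finset.disjoint_sdiff
    rw [Finset.sum_congr rfl this, ← Finset.mul_sum]
    have h2 : ∑ E ∈ (F \ F0).powerset, (-1:ℝ)^E.card = if F \ F0 = ∅ then 1 else 0 := by
      have := Finset.sum_powerset_neg_one_pow_card (x := F \ F0)
      exact_mod_cast this
    rw [h2]
    simp only [Finset.sdiff_eq_empty_iff_subset]
    by_cases hF : F ⊆ F0
    · have : F0 = F := Finset.Subset.antisymm h hF
      simp [this]
    · have : F0 ≠ F := by rintro rfl; exact hF (Finset.Subset.refl _)
      simp [this, hF]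
  · intro E hE E' hE' hEE
    simp only [Finset.coe_powerset, Set.mem_preimage, Set.mem_powerset_iff, Finset.coe_subset] at hE hE'
    simp only at hEE
    ext x
    have h3 := Finset.ext_iff.1 hEE x
    simp only [Finset.mem_union] at h3
    constructor
    · intro hx
      have h4 := Finset.mem_sdiff.1 (hE hx)
      tauto
    · intro hx
      have h4 := Finset.mem_sdiff.1 (hE' hx)
      tauto

lemma aux_diag (𝒟 : Finset (Finset ℕ)) (hdown : ∀ F ∈ 𝒟, ∀ E, E ⊆ F → E ∈ 𝒟)
    (ν : ℕ → ℝ) (hν : ∀ F ∈ 𝒟, ∀ p ∈ F, 0 < ν p ∧ ν p < 1) (lam : Finset ℕ → ℝ) :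
    ∑ D ∈ 𝒟, ∑ E ∈ 𝒟, lam D * lam E * ∏ p ∈ D ∪ E, ν p
      = ∑ F ∈ 𝒟, (∏ p ∈ F, (1 - ν p) / ν p) *
        (∑ D ∈ 𝒟.filter (fun D => F ⊆ D), lam D * ∏ p ∈ D, ν p)^2 := by
  have h1 : ∀ D ∈ 𝒟, ∀ E ∈ 𝒟, ∏ p ∈ D ∪ E, ν p = (∏ p ∈ D, ν p) * (∏ p ∈ E, ν p) *
      ∑ F ∈ 𝒟, if F ⊆ D ∧ F ⊆ E then ∏ p ∈ F, (1 - ν p) / ν p else 0 := by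
    intro D hD E hE
    rw [← Finset.sum_filter]
    have : 𝒟.filter (fun F => F ⊆ D ∧ F ⊆ E) = (D ∩ E).powerset := by
      ext F
      simp only [Finset.mem_filter, Finset.mem_powerset, Finset.subset_inter_iff]
      exact ⟨fun h => h.2, fun h => ⟨hdown D hD F h.1, h⟩⟩
    rw [this, ← Finset.prod_one_add, ← Finset.prod_union_inter, mul_assoc, ← Finset.prod_mul_distrib]
    rw [Finset.prod_eq_one (s := D ∩ E), mul_one]
    intro p hp
    have := hν D hD p (Finset.mem_inter.1 hp).1
    field_simp [this.1.ne']
    ring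
  calc _ = ∑ D ∈ 𝒟, ∑ E ∈ 𝒟, ∑ F ∈ 𝒟, (∏ p ∈ F, (1 - ν p) / ν p) *
        ((if F ⊆ D then lam D * ∏ p ∈ D, ν p else 0) * (if F ⊆ E then lam E * ∏ p ∈ E, ν p else 0)) := by
        apply Finset.sum_congr rfl
        intro D hD
        apply Finset.sum_congr rfl
        intro E hE
        rw [h1 D hD E hE, Finset.mul_sum, Finset.mul_sum]
        apply Finset.sum_congr rfl
        intro F _
        by_cases a : F ⊆ D <;> by_cases b : F ⊆ E <;> simp [a, b]
        ring
    _ = _ := by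
        simp only [Finset.sum_filter, pow_two, Finset.sum_mul_sum]
        simp only [Finset.mul_sum]
        rw [Finset.sum_comm]
        conv_lhs => rw [Finset.sum_comm]; arg 2; ext D; rw [Finset.sum_comm]
        rw [Finset.sum_comm]

lemma aux_selberg (𝒟 : Finset (Finset ℕ)) (hdown : ∀ F ∈ 𝒟, ∀ E, E ⊆ F → E ∈ 𝒟) (h0 : ∅ ∈ 𝒟)
    (ν : ℕ → ℝ) (hν : ∀ F ∈ 𝒟, ∀ p ∈ F, 0 < ν p ∧ ν p ≤ 2 / 3)
    (I : Finset ℕ) (A : ℕ → Finset ℕ) (N : ℝ)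
    (hr : ∀ D ∈ 𝒟, ∀ E ∈ 𝒟, |((I.filter (fun n => D ∪ E ⊆ A n)).card : ℝ) - N * ∏ p ∈ D ∪ E, ν p|
        ≤ 2 ^ (D ∪ E).card) :
    ((I.filter (fun n => A n = ∅)).card : ℝ) ≤
      N / (∑ F ∈ 𝒟, ∏ p ∈ F, ν p / (1 - ν p)) + (∑ D ∈ 𝒟, 6 ^ D.card) ^ 2 := by
  set g : Finset ℕ → ℝ := fun F => ∏ p ∈ F, ν p / (1 - ν p) with hg
  set G := ∑ F ∈ 𝒟, g F with hG
  have hgpos : ∀ F ∈ 𝒟, 0 < g F := fun F hF => Finset.prod_pos fun p hp => by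
    have := hν F hF p hp
    exact div_pos this.1 (by linarith)
  have hνpos : ∀ F ∈ 𝒟, 0 < ∏ p ∈ F, ν p := fun F hF => Finset.prod_pos fun p hp => (hν F hF p hp).1
  have hGpos : 0 < G := Finset.sum_pos hgpos ⟨∅, h0⟩
  set lam : Finset ℕ → ℝ := fun D => (-1)^D.card * (∏ p ∈ D, ν p)⁻¹ * G⁻¹ *
    ∑ F ∈ 𝒟.filter (fun F => D ⊆ F), g F with hlam
  have hlam0 : lam ∅ = 1 := by
    simp only [hlam, Finset.empty_subset, Finset.filter_true, Finset.card_empty, Finset.prod_empty]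
    rw [← hG]
    field_simp
  have hlamb : ∀ D ∈ 𝒟, |lam D| ≤ 3 ^ D.card := by
    intro D hD
    have hs : ∑ F ∈ 𝒟.filter (fun F => D ⊆ F), g F ≤ g D * G := by
      rw [hG, Finset.mul_sum]
      calc _ = ∑ F ∈ 𝒟.filter (fun F => D ⊆ F), g D * g (F \ D) := by
            apply Finset.sum_congr rfl
            intro F hF
            rw [hg]
            simp only
            rw [mul_comm, Finset.prod_sdiff (Finset.mem_filter.1 hF).2]
        _ = ∑ E ∈ (𝒟.filter (fun F => D ⊆ F)).image (fun F => F \ D), g D * g E := by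
            rw [Finset.sum_image]
            intro F hF F' hF' h
            have h1 := (Finset.mem_filter.1 hF).2
            have h2 := (Finset.mem_filter.1 hF').2
            simp only at h
            rw [← Finset.sdiff_union_of_subset h1, ← Finset.sdiff_union_of_subset h2, h]
        _ ≤ _ := by
            apply Finset.sum_le_sum_of_subset_of_nonneg
            · intro E hE
              rw [Finset.mem_image] at hE
              obtain ⟨F, hF, rfl⟩ := hE
              exact hdown F (Finset.mem_filter.1 hF).1 _ Finset.sdiff_subset
            · intro E hE _
              exact mul_nonneg (hgpos D hD).le (hgpos E hE).le
    have hs0 : 0 ≤ ∑ F ∈ 𝒟.filter (fun F => D ⊆ F), g F :=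
      Finset.sum_nonneg fun F hF => (hgpos F (Finset.mem_filter.1 hF).1).le
    have hνD := hνpos D hD
    calc |lam D| = (∏ p ∈ D, ν p)⁻¹ * G⁻¹ * ∑ F ∈ 𝒟.filter (fun F => D ⊆ F), g F := by
          simp only [hlam, abs_mul, abs_pow, abs_neg, abs_one, one_pow, one_mul]
          rw [abs_of_pos (inv_pos.2 hνD), abs_of_pos (inv_pos.2 hGpos), abs_of_nonneg hs0]
      _ ≤ (∏ p ∈ D, ν p)⁻¹ * G⁻¹ * (g D * G) := by gcongr
      _ = ∏ p ∈ D, (1 - ν p)⁻¹ := by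
          rw [hg]
          simp only [div_eq_mul_inv, Finset.prod_mul_distrib]
          field_simp
      _ ≤ ∏ p ∈ D, 3 := by
          apply Finset.prod_le_prod
          · intro p hp
            have := hν D hD p hp
            exact inv_nonneg.2 (by linarith)
          · intro p hp
            have := hν D hD p hp
            rw [show (3:ℝ) = (1/3)⁻¹ by norm_num]
            apply inv_anti₀ (by norm_num) (by linarith)
      _ = _ := by simp
  have hdiag : ∀ F ∈ 𝒟, ∑ D ∈ 𝒟.filter (fun D => F ⊆ D), lam D * ∏ p ∈ D, ν p
      = (-1)^F.card * g F * G⁻¹ := by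
    intro F hF
    calc _ = ∑ D ∈ 𝒟.filter (fun D => F ⊆ D), ∑ E ∈ 𝒟, if D ⊆ E then G⁻¹ * g E * (-1)^D.card else 0 := by
          apply Finset.sum_congr rfl
          intro D hD
          have := hνpos D (Finset.mem_filter.1 hD).1
          rw [← Finset.sum_filter]
          simp only [hlam]
          rw [← Finset.sum_mul, ← Finset.mul_sum]
          field_simp
      _ = ∑ E ∈ 𝒟, G⁻¹ * g E * (if F = E then (-1)^F.card else 0) := by
          rw [Finset.sum_comm]
          apply Finset.sum_congr rfl
          intro E hE
          rw [← Finset.sum_filter, ← Finset.mul_sum]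
          by_cases hFE : F ⊆ E
          · rw [← aux_alt F E hFE]
            congr 2
            ext D
            simp only [Finset.mem_filter, Finset.mem_Icc]
            exact ⟨fun h => ⟨h.1.2, h.2⟩, fun h => ⟨⟨hdown E hE D h.2, h.1⟩, h.2⟩⟩
          · have : F ≠ E := by rintro rfl; exact hFE (Finset.Subset.refl _)
            rw [if_neg this, Finset.filter_eq_empty_iff.2, Finset.sum_empty]
            intro D hD hDE
            exact hFE ((Finset.mem_filter.1 hD).2.trans hDE)
      _ = _ := by
          simp only [mul_ite, mul_zero]
          rw [Finset.sum_ite_eq, if_pos hF]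
          ring
  have hmain : ∑ D ∈ 𝒟, ∑ E ∈ 𝒟, lam D * lam E * ∏ p ∈ D ∪ E, ν p = G⁻¹ := by
    rw [aux_diag 𝒟 hdown ν (fun F hF p hp => ⟨(hν F hF p hp).1, by linarith [(hν F hF p hp).2]⟩)]
    calc _ = ∑ F ∈ 𝒟, g F * (G⁻¹)^2 := by
          apply Finset.sum_congr rfl
          intro F hF
          rw [hdiag F hF, mul_pow, mul_pow, ← pow_mul, mul_comm F.card 2, pow_mul]
          have : (∏ p ∈ F, (1 - ν p) / ν p) * g F = 1 := by
            rw [hg]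
            simp only
            rw [← Finset.prod_mul_distrib]
            apply Finset.prod_eq_one
            intro p hp
            have h1 := hν F hF p hp
            have h2 : 1 - ν p ≠ 0 := by linarith
            have h3 := h1.1.ne'
            field_simp
          rw [neg_one_sq, one_pow]
          linear_combination (g F * (G⁻¹)^2) * this
      _ = G⁻¹ := by
          rw [← Finset.sum_mul, ← hG]
          field_simp
  calc ((I.filter (fun n => A n = ∅)).card : ℝ)
      = ∑ n ∈ I, if A n = ∅ then 1 else 0 := by
        rw [Finset.card_filter]; push_cast; rfl
    _ ≤ ∑ n ∈ I, (∑ D ∈ 𝒟, if D ⊆ A n then lam D else 0)^2 := by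
        apply Finset.sum_le_sum
        intro n _
        split_ifs with h
        · rw [h]
          simp only [Finset.subset_empty]
          rw [Finset.sum_ite_eq', if_pos h0, hlam0]
          norm_num
        · positivity
    _ = ∑ D ∈ 𝒟, ∑ E ∈ 𝒟, lam D * lam E * ((I.filter (fun n => D ∪ E ⊆ A n)).card : ℝ) := by
        simp only [pow_two, Finset.sum_mul_sum]
        rw [Finset.sum_comm]
        apply Finset.sum_congr rfl
        intro D _
        rw [Finset.sum_comm]
        apply Finset.sum_congr rfl
        intro E _
        rw [Finset.card_filter]
        push_cast
        rw [Finset.mul_sum]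
        apply Finset.sum_congr rfl
        intro n _
        by_cases a : D ⊆ A n <;> by_cases b : E ⊆ A n <;> simp [a, b, Finset.union_subset_iff]
    _ = N * (∑ D ∈ 𝒟, ∑ E ∈ 𝒟, lam D * lam E * ∏ p ∈ D ∪ E, ν p) + ∑ D ∈ 𝒟, ∑ E ∈ 𝒟, lam D * lam E *
          (((I.filter (fun n => D ∪ E ⊆ A n)).card : ℝ) - N * ∏ p ∈ D ∪ E, ν p) := by
        simp only [Finset.mul_sum, ← Finset.sum_add_distrib]
        apply Finset.sum_congr rfl
        intro D _
        apply Finset.sum_congr rfl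
        intro E _
        ring
    _ ≤ N / G + (∑ D ∈ 𝒟, 6 ^ D.card) ^ 2 := by
        rw [hmain, div_eq_mul_inv, pow_two, Finset.sum_mul_sum]
        apply add_le_add le_rfl
        refine Finset.sum_le_sum fun D hD => Finset.sum_le_sum fun E hE => ?_
        calc _ ≤ |lam D * lam E * (((I.filter (fun n => D ∪ E ⊆ A n)).card : ℝ) - N * ∏ p ∈ D ∪ E, ν p)| :=
              le_abs_self _
          _ ≤ 3 ^ D.card * 3 ^ E.card * 2 ^ (D ∪ E).card := by
              rw [abs_mul, abs_mul]
              gcongr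
              · exact hlamb D hD
              · exact hlamb E hE
              · exact hr D hD E hE
          _ ≤ 3 ^ D.card * 3 ^ E.card * 2 ^ (D.card + E.card) := by
              gcongr
              · norm_num
              · exact Finset.card_union_le D E
          _ = 6 ^ D.card * 6 ^ E.card := by
              rw [pow_add, show (6:ℝ) = 3 * 2 by norm_num, mul_pow, mul_pow]
              ring

lemma aux_one (z : ℝ) (hz : 2 ≤ z) (S : Finset ℕ) (hS : ∀ p ∈ S, p.Prime ∧ 3 ≤ p ∧ (p:ℝ) ≤ z)
    (a b l : ℕ) (hab : a ≤ b) :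
    (((Finset.Ioc a b).filter (fun n => ∀ p ∈ S, ¬ p ∣ n ∧ ¬ p ∣ (n + l))).card : ℝ) ≤
      2 * ((b:ℝ) - a) * (∏ p ∈ S.filter (fun p => p ∣ l), (1 + 1 / (p:ℝ))) /
        (∏ p ∈ S, (1 + 1 / (p:ℝ)))^2 + z ^ 222 := by
  have hN : (0:ℝ) ≤ (b:ℝ) - a := sub_nonneg.2 (by exact_mod_cast hab)
  have hz0 : 0 < z := by linarith
  set Ω : ℕ → Finset ℕ := fun p => {0, (p - l % p) % p} with hΩ
  have hΩr : ∀ p ∈ S, Ω p ⊆ Finset.range p := by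
    intro p hp
    have := (hS p hp).1.pos
    intro x hx
    simp only [hΩ, Finset.mem_insert, Finset.mem_singleton] at hx
    rw [Finset.mem_range]
    rcases hx with rfl | rfl
    · exact this
    · exact Nat.mod_lt _ this
  have hΩ2 : ∀ p, (Ω p).card ≤ 2 := fun p => Finset.card_le_two
  have hΩ1 : ∀ p, 1 ≤ (Ω p).card := fun p => Finset.card_pos.2 ⟨0, by simp [hΩ]⟩
  have hΩn : ∀ p ∈ S, ¬ p ∣ l → (Ω p).card = 2 := by
    intro p hp hpl
    apply Finset.card_pair
    have hp0 := (hS p hp).1.pos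
    have h1 : l % p < p := Nat.mod_lt _ hp0
    have h2 : l % p ≠ 0 := fun h => hpl (Nat.dvd_of_mod_eq_zero h)
    rw [Nat.mod_eq_of_lt (by omega)]
    omega
  have hΩm : ∀ p ∈ S, ∀ n, n % p ∈ Ω p ↔ (p ∣ n ∨ p ∣ n + l) := by
    intro p hp n
    have hp0 := (hS p hp).1.pos
    simp only [hΩ, Finset.mem_insert, Finset.mem_singleton]
    apply or_congr (Nat.dvd_iff_mod_eq_zero).symm
    have h1 : l % p < p := Nat.mod_lt _ hp0
    have h2 : (p - l % p) + l ≡ 0 [MOD p] := by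
      have : (p - l % p) + l = p * (1 + l / p) := by
        have := Nat.mod_add_div l p
        rw [mul_add]; omega
      rw [this]
      exact (Nat.modEq_zero_iff_dvd).2 (Dvd.intro _ rfl)
    rw [← Nat.modEq_zero_iff_dvd]
    constructor
    · intro h
      exact (Nat.ModEq.add_right l (show n ≡ (p - l % p) [MOD p] from h)).trans h2
    · intro h
      exact Nat.ModEq.add_right_cancel' l (h.trans h2.symm)
  set 𝒟 := S.powerset.filter (fun F => ((∏ p ∈ F, p : ℕ) : ℝ) ≤ z ^ 37) with h𝒟
  have hsub : ∀ F ∈ 𝒟, F ⊆ S := fun F hF => Finset.mem_powerset.1 (Finset.mem_filter.1 hF).1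
  set ν : ℕ → ℝ := fun p => ((Ω p).card : ℝ) / p with hν
  have hνb : ∀ p ∈ S, 0 < ν p ∧ ν p ≤ 2 / 3 ∧ ν p ≤ 2 / p := by
    intro p hp
    have h3 : (3:ℝ) ≤ p := by exact_mod_cast (hS p hp).2.1
    have h1 : (1:ℝ) ≤ (Ω p).card := by exact_mod_cast hΩ1 p
    have h2 : ((Ω p).card:ℝ) ≤ 2 := by exact_mod_cast hΩ2 p
    have hp0 : (0:ℝ) < p := by linarith
    refine ⟨by simp only [hν]; positivity, ?_, ?_⟩
    · simp only [hν]
      exact div_le_div₀ (by norm_num) h2 (by norm_num) h3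
    · simp only [hν]
      gcongr
  have hsel := aux_selberg 𝒟 (by
      intro F hF E hE
      simp only [h𝒟, Finset.mem_filter, Finset.mem_powerset] at hF ⊢
      refine ⟨hE.trans hF.1, le_trans ?_ hF.2⟩
      have : ∏ p ∈ E, p ≤ ∏ p ∈ F, p :=
        Finset.prod_le_prod_of_subset_of_one_le' hE (fun p hp _ => (hS p (hF.1 hp)).1.one_le)
      exact_mod_cast this) (by
      simp only [h𝒟, Finset.mem_filter, Finset.mem_powerset, Finset.empty_subset, Finset.prod_empty, true_and]
      push_cast
      exact one_le_pow₀ (by linarith)) ν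
    (fun F hF p hp => ⟨(hνb p (hsub F hF hp)).1, (hνb p (hsub F hF hp)).2.1⟩)
    (Finset.Ioc a b) (fun n => S.filter (fun p => n % p ∈ Ω p)) ((b:ℝ) - a) (by
      intro D hD E hE
      have hDE : D ∪ E ⊆ S := Finset.union_subset (hsub D hD) (hsub E hE)
      have h := aux_count a b hab Ω (D ∪ E) (fun p hp => ⟨(hS p (hDE hp)).1, hΩr p (hDE hp)⟩) 1 0
        one_pos (fun p _ => Nat.coprime_one_left p)
      have e : (Finset.Ioc a b).filter (fun n => D ∪ E ⊆ S.filter (fun p => n % p ∈ Ω p)) =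
        (Finset.Ioc a b).filter (fun n => n ≡ 0 [MOD 1] ∧ ∀ p ∈ D ∪ E, n % p ∈ Ω p) := by
        apply Finset.filter_congr
        intro n _
        constructor
        · intro h
          exact ⟨Nat.modEq_one, fun p hp => (Finset.mem_filter.1 (h hp)).2⟩
        · intro h p hp
          exact Finset.mem_filter.2 ⟨hDE hp, h.2 p hp⟩
      rw [e]
      rw [Nat.cast_one, div_one] at h
      refine h.trans ?_
      rw [← Finset.prod_const]
      apply Finset.prod_le_prod
      · intros; positivity
      · intro p _; exact_mod_cast hΩ2 p)
  have e1 : (Finset.Ioc a b).filter (fun n => S.filter (fun p => n % p ∈ Ω p) = ∅) =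
      (Finset.Ioc a b).filter (fun n => ∀ p ∈ S, ¬ p ∣ n ∧ ¬ p ∣ (n + l)) := by
    apply Finset.filter_congr
    intro n _
    rw [Finset.filter_eq_empty_iff]
    constructor
    · intro h p hp
      have := h hp
      rw [hΩm p hp n] at this
      tauto
    · intro h p hp
      rw [hΩm p hp n]
      have := h p hp
      tauto
  rw [e1] at hsel
  have herr : ∑ D ∈ 𝒟, (6:ℝ) ^ D.card ≤ (z^37)^3 := by
    have hc : (𝒟.card : ℝ) ≤ z^37 := by
      have : 𝒟.card ≤ (Finset.Icc 1 ⌊z^37⌋₊).card := by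
        apply Finset.card_le_card_of_injOn (fun F => ∏ p ∈ F, p)
        · intro F hF
          rw [Finset.mem_coe] at hF
          simp only [Finset.coe_Icc, Set.mem_Icc]
          constructor
          · apply Nat.one_le_iff_ne_zero.2
            rw [Finset.prod_ne_zero_iff]
            intro p hp
            exact (hS p (hsub F hF hp)).1.ne_zero
          · exact Nat.le_floor (Finset.mem_filter.1 hF).2
        · intro F hF F' hF' h
          exact aux_inj (fun p hp => (hS p (hsub F hF hp)).1) (fun p hp => (hS p (hsub F' hF' hp)).1) h
      rw [Nat.card_Icc, Nat.add_sub_cancel] at this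
      calc (𝒟.card : ℝ) ≤ (⌊z^37⌋₊ : ℝ) := by exact_mod_cast this
        _ ≤ _ := Nat.floor_le (by positivity)
    calc _ ≤ ∑ D ∈ 𝒟, (z^37)^2 := by
          apply Finset.sum_le_sum
          intro D hD
          calc (6:ℝ)^D.card = ∏ p ∈ D, (6:ℝ) := by simp
            _ ≤ ∏ p ∈ D, (p:ℝ)^2 := by
              apply Finset.prod_le_prod
              · intros; norm_num
              · intro p hp
                have h3 : (3:ℝ) ≤ p := by exact_mod_cast (hS p (hsub D hD hp)).2.1
                nlinarith
            _ = (((∏ p ∈ D, p : ℕ)) : ℝ)^2 := by rw [Finset.prod_pow]; push_cast; rfl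
            _ ≤ _ := by
              gcongr
              exact (Finset.mem_filter.1 hD).2
      _ = 𝒟.card * (z^37)^2 := by rw [Finset.sum_const, nsmul_eq_mul]
      _ ≤ z^37 * (z^37)^2 := by gcongr
      _ = _ := by ring
  have herr2 : (∑ D ∈ 𝒟, (6:ℝ) ^ D.card)^2 ≤ z^222 := by
    calc _ ≤ ((z^37)^3)^2 := by gcongr
      _ = _ := by ring
  have hran := aux_rankin z hz S (fun p hp => ⟨(hS p hp).1, (hS p hp).2.2⟩) (fun p => ν p / (1 - ν p)) (by
    intro p hp
    obtain ⟨h1, h2, h3⟩ := hνb p hp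
    refine ⟨div_nonneg h1.le (by linarith), ?_⟩
    have hp0 : (0:ℝ) < p := by exact_mod_cast (hS p hp).1.pos
    calc ν p / (1 - ν p) ≤ (2 / p) / (1/3) := by
          apply div_le_div₀ (by positivity) h3 (by norm_num) (by linarith)
      _ = 6 / p := by ring)
  rw [← h𝒟] at hran
  set V := ∏ p ∈ S, (1 + 1 / (p:ℝ)) with hV
  set W := ∏ p ∈ S.filter (fun p => p ∣ l), (1 + 1 / (p:ℝ)) with hW
  have hV0 : 0 < V := Finset.prod_pos fun p _ => by positivity
  have hW0 : 0 < W := Finset.prod_pos fun p _ => by positivity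
  have hVW : V^2 ≤ (∏ p ∈ S, (1 + ν p / (1 - ν p))) * W := by
    rw [hV, hW, Finset.prod_filter, ← Finset.prod_pow, ← Finset.prod_mul_distrib]
    apply Finset.prod_le_prod
    · intros; positivity
    · intro p hp
      obtain ⟨h1, h2, h3⟩ := hνb p hp
      have h3 : (3:ℝ) ≤ p := by exact_mod_cast (hS p hp).2.1
      have hp0 : (0:ℝ) < p := by linarith
      have hpos : (0:ℝ) < 1 - ν p := by linarith
      have hge : (1:ℝ) / p ≤ ν p := by
        simp only [hν]
        gcongr
        exact_mod_cast hΩ1 p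
      have e : 1 + ν p / (1 - ν p) = 1 / (1 - ν p) := by field_simp; ring
      rw [e]
      set t := (1:ℝ) / p with ht
      have ht0 : 0 < t := by positivity
      have ht1 : t ≤ 1/3 := by
        rw [ht]; exact one_div_le_one_div_of_le (by norm_num) h3
      split_ifs with hpl
      · rw [pow_two]
        gcongr
        rw [le_div_iff₀ hpos]
        nlinarith
      · have : ν p = 2 * t := by
          simp only [hν, ht]
          rw [hΩn p hp hpl]
          push_cast
          ring
        rw [mul_one, le_div_iff₀ hpos, this]
        nlinarith [sq_nonneg t, pow_pos ht0 3]
  have hG : V^2 / (2 * W) ≤ ∑ F ∈ 𝒟, ∏ p ∈ F, ν p / (1 - ν p) := by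
    refine le_trans ?_ hran
    rw [div_le_iff₀ (by positivity)]
    linarith
  calc _ ≤ _ := hsel
    _ ≤ ((b:ℝ) - a) / (V^2 / (2 * W)) + z^222 := by gcongr
    _ = _ := by
      field_simp

theorem stmt_5 :
    ∃ C : ℝ, ∀ X P Q : ℝ, ∀ h : ℕ, 3 ≤ P → P ≤ Q → Q ≤ X → 1 ≤ h → (h : ℝ) ≤ X →
      ∑ l ∈ Finset.Icc 1 h,
        (((Finset.Icc ⌈X⌉₊ ⌊2 * X⌋₊).filter (fun n =>
            (∀ p : ℕ, p.Prime → P ≤ (p : ℝ) → (p : ℝ) ≤ Q → ¬ p ∣ n) ∧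
            (∀ p : ℕ, p.Prime → P ≤ (p : ℝ) → (p : ℝ) ≤ Q → ¬ p ∣ (n + l)))).card : ℝ)
        ≤ C * h * X * (Real.log P / Real.log Q) ^ 2 := by
  refine ⟨8 * (156 * 296)^2 + 64, ?_⟩
  intro X P Q h hP hPQ hQX hh hhX
  have hX0 : 0 < X := by linarith
  have hQ0 : 0 < Q := by linarith
  have hlP : 1 ≤ Real.log P := by
    rw [Real.le_log_iff_exp_le (by linarith)]
    linarith [Real.exp_one_lt_d9]
  have hlPQ : Real.log P ≤ Real.log Q := Real.log_le_log (by linarith) hPQ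
  have hlQX : Real.log Q ≤ Real.log X := Real.log_le_log hQ0 hQX
  have hlQ : 0 < Real.log Q := by linarith
  set L := Real.log P / Real.log Q with hL
  have hL0 : 0 < L := by positivity
  have hceil : 1 ≤ ⌈X⌉₊ := Nat.one_le_ceil_iff.2 hX0
  have hc1 : X ≤ (⌈X⌉₊ : ℝ) := Nat.le_ceil X
  have hc2 : (⌈X⌉₊ : ℝ) < X + 1 := Nat.ceil_lt_add_one hX0.le
  have hf1 : (⌊2 * X⌋₊ : ℝ) ≤ 2 * X := Nat.floor_le (by linarith)
  have hf2 : 2 * X < (⌊2 * X⌋₊ : ℝ) + 1 := Nat.lt_floor_add_one _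
  have hcf : ⌈X⌉₊ ≤ ⌊2 * X⌋₊ := by
    have : (⌈X⌉₊ : ℝ) < ((⌊2 * X⌋₊ + 1 : ℕ) : ℝ) := by push_cast; linarith
    have := Nat.cast_lt.1 this
    omega
  set a := ⌈X⌉₊ - 1 with ha
  set b := ⌊2 * X⌋₊ with hb
  have hIcc : Finset.Icc ⌈X⌉₊ b = Finset.Ioc a b := by
    ext n; simp only [Finset.mem_Icc, Finset.mem_Ioc]; omega
  rw [hIcc]
  have hab : a ≤ b := by omega
  have hba : (b:ℝ) - a ≤ 2 * X := by
    have : (a:ℝ) = (⌈X⌉₊ : ℝ) - 1 := by rw [ha, Nat.cast_sub hceil]; norm_num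
    rw [this]; linarith
  have hba0 : (0:ℝ) ≤ (b:ℝ) - a := sub_nonneg.2 (by exact_mod_cast hab)
  set z := Q ^ ((1:ℝ)/296) with hz
  have hlz : Real.log z = Real.log Q / 296 := by
    rw [hz, Real.log_rpow hQ0]; ring
  have hhX0 : (0:ℝ) ≤ h * X := by positivity
  by_cases hPz : z ≤ P
  · have h1 : 1 ≤ 296 * L := by
      have : Real.log z ≤ Real.log P := Real.log_le_log (by positivity) hPz
      rw [hlz] at this
      rw [hL, ← mul_div_assoc, le_div_iff₀ hlQ]
      linarith
    calc _ ≤ ∑ l ∈ Finset.Icc 1 h, (2 * X) := by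
          apply Finset.sum_le_sum
          intro l _
          calc _ ≤ ((Finset.Ioc a b).card : ℝ) := by exact_mod_cast Finset.card_filter_le _ _
            _ = (b:ℝ) - a := by rw [Nat.card_Ioc, Nat.cast_sub hab]
            _ ≤ _ := hba
      _ = 2 * (h * X) := by
          rw [Finset.sum_const, nsmul_eq_mul, Nat.card_Icc, Nat.add_sub_cancel]; ring
      _ ≤ 2 * (h * X) * (296 * L)^2 := by
          apply le_mul_of_one_le_right (by positivity)
          exact one_le_pow₀ h1
      _ = (2 * 296^2) * (h * X * L^2) := by ring
      _ ≤ (8 * (156 * 296)^2 + 64) * (h * X * L^2) := by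
          gcongr ?_ * _
          norm_num
      _ = _ := by ring
  · push Not at hPz
    have hz2 : 2 ≤ z := by linarith
    have hzQ : z ≤ Q := by
      calc z ≤ Q ^ (1:ℝ) := Real.rpow_le_rpow_of_exponent_le (by linarith) (by norm_num)
        _ = Q := Real.rpow_one Q
    set S : Finset ℕ := (Finset.Icc 1 ⌊z⌋₊).filter (fun p : ℕ => p.Prime ∧ P ≤ (p:ℝ)) with hS
    have hSm : ∀ p ∈ S, p.Prime ∧ P ≤ (p:ℝ) ∧ (p:ℝ) ≤ z := by
      intro p hp
      simp only [hS, Finset.mem_filter, Finset.mem_Icc] at hp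
      exact ⟨hp.2.1, hp.2.2, (Nat.le_floor_iff (by linarith)).1 hp.1.2⟩
    have hS3 : ∀ p ∈ S, p.Prime ∧ 3 ≤ p ∧ (p:ℝ) ≤ z := by
      intro p hp
      obtain ⟨h1, h2, h3⟩ := hSm p hp
      refine ⟨h1, ?_, h3⟩
      have : (3:ℝ) ≤ p := by linarith
      exact_mod_cast this
    set V := ∏ p ∈ S, (1 + 1 / (p:ℝ)) with hV
    have hV0 : 0 < V := Finset.prod_pos fun p _ => by positivity
    have hVlow : Real.log z ≤ 156 * V * Real.log P := by
      have h1 := aux_lower ⌊z⌋₊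
      have hP2 : 2 ≤ ⌊P⌋₊ := Nat.le_floor (by push_cast; linarith)
      have h2 := aux_upper ⌊P⌋₊ hP2
      have h3 : ∏ p ∈ (Finset.Icc 1 ⌊z⌋₊).filter Nat.Prime, (1 + 1 / (p:ℝ)) ≤
          V * ∏ p ∈ (Finset.Icc 1 ⌊P⌋₊).filter Nat.Prime, (1 + 1 / (p:ℝ)) := by
        have hsub : (Finset.Icc 1 ⌊z⌋₊).filter Nat.Prime ⊆ S ∪ (Finset.Icc 1 ⌊P⌋₊).filter Nat.Prime := by
          intro p hp
          simp only [hS, Finset.mem_union, Finset.mem_filter, Finset.mem_Icc] at hp ⊢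
          by_cases hPp : P ≤ p
          · left; exact ⟨hp.1, hp.2, hPp⟩
          · right; push Not at hPp
            exact ⟨⟨hp.1.1, Nat.le_floor hPp.le⟩, hp.2⟩
        rw [hV, ← Finset.prod_union_inter]
        calc _ ≤ ∏ p ∈ S ∪ (Finset.Icc 1 ⌊P⌋₊).filter Nat.Prime, (1 + 1 / (p:ℝ)) := by
              apply Finset.prod_le_prod_of_subset_of_one_le hsub
              · intros; positivity
              · intro p _ _
                have : 0 ≤ 1 / (p:ℝ) := by positivity
                linarith
          _ ≤ _ := by
              apply le_mul_of_one_le_right (Finset.prod_nonneg fun p _ => by positivity)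
              refine (Finset.prod_const_one (s := S ∩ (Finset.Icc 1 ⌊P⌋₊).filter Nat.Prime)).symm.le.trans ?_
              refine Finset.prod_le_prod (fun p _ => zero_le_one) fun p _ => ?_
              have : 0 ≤ 1 / (p:ℝ) := by positivity
              linarith
      have h4 : Real.log z ≤ Real.log (⌊z⌋₊ + 1) :=
        Real.log_le_log (by linarith) (Nat.lt_floor_add_one z).le
      have h5 : Real.log ⌊P⌋₊ ≤ Real.log P :=
        Real.log_le_log (by exact_mod_cast (by omega : 0 < ⌊P⌋₊)) (Nat.floor_le (by linarith))
      calc _ ≤ _ := h4.trans h1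
        _ ≤ 2 * (V * (78 * Real.log P)) := by
            refine mul_le_mul_of_nonneg_left (h3.trans ?_) (by norm_num)
            refine mul_le_mul_of_nonneg_left (h2.trans ?_) hV0.le
            linarith
        _ = _ := by ring
    have hVinv : 1 / V^2 ≤ (156 * 296)^2 * L^2 := by
      have : 1 ≤ 156 * 296 * L * V := by
        rw [hlz] at hVlow
        rw [hL]
        rw [show 156 * 296 * (Real.log P / Real.log Q) * V = (156 * 296 * Real.log P * V) / Real.log Q by ring]
        rw [le_div_iff₀ hlQ]
        linarith
      rw [div_le_iff₀ (by positivity)]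
      calc (1:ℝ) ≤ (156 * 296 * L * V)^2 := one_le_pow₀ this
        _ = _ := by ring
    have hzerr : z^222 ≤ 64 * X * L^2 := by
      have h1 : z^222 = Q ^ ((3:ℝ)/4) := by
        rw [hz, ← Real.rpow_natCast, ← Real.rpow_mul hQ0.le]; norm_num
      have h2 : Q ^ ((3:ℝ)/4) ≤ X ^ ((3:ℝ)/4) := Real.rpow_le_rpow hQ0.le hQX (by norm_num)
      have h3 : Real.log X ≤ X ^ ((1:ℝ)/8) / (1/8) := Real.log_le_rpow_div hX0.le (by norm_num)
      have h4 : (X ^ ((1:ℝ)/8))^2 = X ^ ((1:ℝ)/4) := by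
        rw [← Real.rpow_natCast, ← Real.rpow_mul hX0.le]; norm_num
      have h5 : X ^ ((3:ℝ)/4) * X ^ ((1:ℝ)/4) = X := by
        rw [← Real.rpow_add hX0]; norm_num
      have h6 : Real.log Q ^ 2 ≤ 64 * X ^ ((1:ℝ)/4) := by
        calc Real.log Q ^ 2 ≤ (X ^ ((1:ℝ)/8) / (1/8))^2 := by
              gcongr
              linarith
          _ = 64 * (X ^ ((1:ℝ)/8))^2 := by ring
          _ = _ := by rw [h4]
      rw [h1]
      refine h2.trans ?_
      rw [hL, div_pow, ← mul_div_assoc, le_div_iff₀ (by positivity)]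
      calc X ^ ((3:ℝ)/4) * Real.log Q ^ 2 ≤ X ^ ((3:ℝ)/4) * (64 * X ^ ((1:ℝ)/4)) := by gcongr
        _ = 64 * X := by rw [mul_left_comm, h5]
        _ ≤ 64 * X * Real.log P ^ 2 := by
            apply le_mul_of_one_le_right (by positivity)
            exact one_le_pow₀ hlP
    have havg := aux_avg S (fun p hp => (hSm p hp).1) h
    calc _ ≤ ∑ l ∈ Finset.Icc 1 h, (4 * X * (1 / V^2) *
            (∏ p ∈ S.filter (fun p => p ∣ l), (1 + 1 / (p:ℝ))) + z^222) := by
          apply Finset.sum_le_sum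
          intro l _
          calc _ ≤ (((Finset.Ioc a b).filter (fun n => ∀ p ∈ S, ¬ p ∣ n ∧ ¬ p ∣ (n + l))).card : ℝ) := by
                norm_cast
                apply Finset.card_le_card
                intro n hn
                rw [Finset.mem_filter] at hn ⊢
                refine ⟨hn.1, fun p hp => ?_⟩
                obtain ⟨h1, h2, h3⟩ := hSm p hp
                exact ⟨hn.2.1 p h1 h2 (h3.trans hzQ), hn.2.2 p h1 h2 (h3.trans hzQ)⟩
            _ ≤ _ := aux_one z hz2 S hS3 a b l hab
            _ ≤ 2 * (2 * X) * (∏ p ∈ S.filter (fun p => p ∣ l), (1 + 1 / (p:ℝ))) / V^2 + z^222 := by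
                gcongr
            _ = _ := by ring
      _ = 4 * X * (1 / V^2) * (∑ l ∈ Finset.Icc 1 h, ∏ p ∈ S.filter (fun p => p ∣ l), (1 + 1 / (p:ℝ)))
            + h * z^222 := by
          rw [Finset.sum_add_distrib, ← Finset.mul_sum, Finset.sum_const, nsmul_eq_mul, Nat.card_Icc,
            Nat.add_sub_cancel]
      _ ≤ 4 * X * ((156 * 296)^2 * L^2) * (2 * h) + h * (64 * X * L^2) := by
          gcongr
      _ = _ := by ring
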